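/- (Integral energy decay for the metric coefficient A.) For every b ∈ [0, 1/2] one has ∫_{R₀}^{∞} (2/R) ∫₀^{2π} (e^{4U(R,θ)}/(4R²)) [ 2b (∂_R A)²(R,θ) + (1−2b) (∂_θ A)²(R,θ) ] dθ dR ≤ 𝓔_b(R₀) + b² 𝓔(R₀). In particular, for b ∈ (0, 1/2), ∫_{R₀}^{∞} (1/(4R³)) ∫₀^{2π} e^{4U(R,θ)} [ (∂_R A)²(R,θ) + (∂_θ A)²(R,θ) ] dθ dR < ∞. -/

import Mathlib

open Real MeasureTheory Set

/-- Partial derivative with respect to the first (time) variable `R`. -/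
noncomputable def pdR (f : ℝ → ℝ → ℝ) (R θ : ℝ) : ℝ := deriv (fun r => f r θ) R

/-- Partial derivative with respect to the second (space) variable `θ`. -/
noncomputable def pdT (f : ℝ → ℝ → ℝ) (R θ : ℝ) : ℝ := deriv (fun t => f R t) θ

lemma hasDerivAt_fst_slice {f : ℝ → ℝ → ℝ} (hf : ContDiff ℝ (⊤ : ℕ∞) (Function.uncurry f))
    (R θ : ℝ) : HasDerivAt (fun r => f r θ) (fderiv ℝ (Function.uncurry f) (R, θ) (1, 0)) R := by
  have h1 : HasFDerivAt (Function.uncurry f) (fderiv ℝ (Function.uncurry f) (R, θ)) (R, θ) :=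
    (hf.differentiable (by simp) _).hasFDerivAt
  have h2 : HasDerivAt (fun r : ℝ => (r, θ)) ((1 : ℝ), (0 : ℝ)) R :=
    (hasDerivAt_id R).prodMk (hasDerivAt_const R θ)
  exact h1.comp_hasDerivAt R h2

lemma hasDerivAt_snd_slice {f : ℝ → ℝ → ℝ} (hf : ContDiff ℝ (⊤ : ℕ∞) (Function.uncurry f))
    (R θ : ℝ) : HasDerivAt (fun t => f R t) (fderiv ℝ (Function.uncurry f) (R, θ) (0, 1)) θ := by
  have h1 : HasFDerivAt (Function.uncurry f) (fderiv ℝ (Function.uncurry f) (R, θ)) (R, θ) :=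
    (hf.differentiable (by simp) _).hasFDerivAt
  have h2 : HasDerivAt (fun t : ℝ => (R, t)) ((0 : ℝ), (1 : ℝ)) θ :=
    (hasDerivAt_const θ R).prodMk (hasDerivAt_id θ)
  exact h1.comp_hasDerivAt θ h2

lemma pdR_eq {f : ℝ → ℝ → ℝ} (hf : ContDiff ℝ (⊤ : ℕ∞) (Function.uncurry f)) (R θ : ℝ) :
    pdR f R θ = fderiv ℝ (Function.uncurry f) (R, θ) (1, 0) :=
  (hasDerivAt_fst_slice hf R θ).deriv

lemma pdT_eq {f : ℝ → ℝ → ℝ} (hf : ContDiff ℝ (⊤ : ℕ∞) (Function.uncurry f)) (R θ : ℝ) :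
    pdT f R θ = fderiv ℝ (Function.uncurry f) (R, θ) (0, 1) :=
  (hasDerivAt_snd_slice hf R θ).deriv

lemma hasDerivAt_pdR {f : ℝ → ℝ → ℝ} (hf : ContDiff ℝ (⊤ : ℕ∞) (Function.uncurry f)) (R θ : ℝ) :
    HasDerivAt (fun r => f r θ) (pdR f R θ) R := by
  rw [pdR_eq hf]; exact hasDerivAt_fst_slice hf R θ

lemma hasDerivAt_pdT {f : ℝ → ℝ → ℝ} (hf : ContDiff ℝ (⊤ : ℕ∞) (Function.uncurry f)) (R θ : ℝ) :
    HasDerivAt (fun t => f R t) (pdT f R θ) θ := by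
  rw [pdT_eq hf]; exact hasDerivAt_snd_slice hf R θ

lemma contDiff_pdR {f : ℝ → ℝ → ℝ} (hf : ContDiff ℝ (⊤ : ℕ∞) (Function.uncurry f)) :
    ContDiff ℝ (⊤ : ℕ∞) (Function.uncurry (pdR f)) := by
  have h : Function.uncurry (pdR f) = fun p => fderiv ℝ (Function.uncurry f) p (1, 0) := by
    funext ⟨R, θ⟩; exact pdR_eq hf R θ
  rw [h]
  exact (hf.fderiv_right (m := ((⊤ : ℕ∞) : WithTop ℕ∞)) (by simp)).clm_apply contDiff_const

lemma contDiff_pdT {f : ℝ → ℝ → ℝ} (hf : ContDiff ℝ (⊤ : ℕ∞) (Function.uncurry f)) :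
    ContDiff ℝ (⊤ : ℕ∞) (Function.uncurry (pdT f)) := by
  have h : Function.uncurry (pdT f) = fun p => fderiv ℝ (Function.uncurry f) p (0, 1) := by
    funext ⟨R, θ⟩; exact pdT_eq hf R θ
  rw [h]
  exact (hf.fderiv_right (m := ((⊤ : ℕ∞) : WithTop ℕ∞)) (by simp)).clm_apply contDiff_const

lemma pdR_pdT_comm {f : ℝ → ℝ → ℝ} (hf : ContDiff ℝ (⊤ : ℕ∞) (Function.uncurry f)) (R θ : ℝ) :
    pdR (pdT f) R θ = pdT (pdR f) R θ := by
  have hd : Differentiable ℝ (fderiv ℝ (Function.uncurry f)) :=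
    (hf.fderiv_right (m := ((⊤ : ℕ∞) : WithTop ℕ∞)) (by simp)).differentiable (by simp)
  have e1 : Function.uncurry (pdT f) = fun p => fderiv ℝ (Function.uncurry f) p (0, 1) := by
    funext ⟨R, θ⟩; exact pdT_eq hf R θ
  have e2 : Function.uncurry (pdR f) = fun p => fderiv ℝ (Function.uncurry f) p (1, 0) := by
    funext ⟨R, θ⟩; exact pdR_eq hf R θ
  rw [pdR_eq (contDiff_pdT hf), pdT_eq (contDiff_pdR hf), e1, e2]
  rw [fderiv_clm_apply (hd _) (by fun_prop), fderiv_clm_apply (hd _) (by fun_prop)]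
  have hs := second_derivative_symmetric (𝕜 := ℝ)
    (fun y => (hf.differentiable (by simp) y).hasFDerivAt) (hd (R, θ)).hasFDerivAt (1, 0) (0, 1)
  simpa using hs

lemma pdR_periodic {f : ℝ → ℝ → ℝ} {c : ℝ} (h : ∀ R θ, f R (θ + c) = f R θ) (R θ : ℝ) :
    pdR f R (θ + c) = pdR f R θ := by
  simp only [pdR, h]

lemma pdT_periodic {f : ℝ → ℝ → ℝ} {c : ℝ} (h : ∀ R θ, f R (θ + c) = f R θ) (R θ : ℝ) :
    pdT f R (θ + c) = pdT f R θ := by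
  unfold pdT
  rw [← deriv_comp_add_const]
  simp only [h]

/-- Differentiation under the integral sign over a compact interval. -/
lemma hasDerivAt_param {F F' : ℝ → ℝ → ℝ} (a b : ℝ) (hF : Continuous (Function.uncurry F))
    (hF' : Continuous (Function.uncurry F'))
    (hd : ∀ R θ, HasDerivAt (fun r => F r θ) (F' R θ) R) (R : ℝ) :
    HasDerivAt (fun r => ∫ θ in a..b, F r θ) (∫ θ in a..b, F' R θ) R := by
  have hK : IsCompact (Icc (R - 1) (R + 1) ×ˢ uIcc a b) := isCompact_Icc.prod isCompact_uIcc
  obtain ⟨C, hC⟩ := hK.exists_bound_of_continuousOn hF'.continuousOn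
  have hc : ∀ r, Continuous (F r) := fun r =>
    hF.comp (Continuous.prodMk continuous_const continuous_id)
  have hc' : ∀ r, Continuous (F' r) := fun r =>
    hF'.comp (Continuous.prodMk continuous_const continuous_id)
  refine (intervalIntegral.hasDerivAt_integral_of_dominated_loc_of_deriv_le
    (s := Icc (R - 1) (R + 1)) (bound := fun _ => C) (Icc_mem_nhds (by linarith) (by linarith))
    (Filter.Eventually.of_forall fun r => (hc r).aestronglyMeasurable)
    ((hc R).intervalIntegrable _ _) (hc' R).aestronglyMeasurable
    (Filter.Eventually.of_forall fun t ht x hx => ?_) (by simp)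
    (Filter.Eventually.of_forall fun t _ x _ => hd x t)).2
  exact hC (x, t) ⟨hx, uIoc_subset_uIcc ht⟩

/-- A nonnegative function with nonpositive derivative has integrable derivative. -/
lemma lintegral_neg_deriv_le {g g' : ℝ → ℝ} {a : ℝ} (hd : ∀ x ∈ Ici a, HasDerivAt g (g' x) x)
    (hneg : ∀ x ∈ Ici a, g' x ≤ 0) (hpos : ∀ x ∈ Ici a, 0 ≤ g x) :
    ∫⁻ x in Ioi a, ENNReal.ofReal (-g' x) ≤ ENNReal.ofReal (g a) := by
  have hanti : AntitoneOn g (Ici a) := by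
    refine antitoneOn_of_deriv_nonpos (convex_Ici a)
      (fun x hx => (hd x hx).continuousAt.continuousWithinAt)
      (fun x hx => (hd x (interior_subset hx)).differentiableAt.differentiableWithinAt)
      (fun x hx => ?_)
    rw [(hd x (interior_subset hx)).deriv]
    exact hneg x (interior_subset hx)
  have hanti' : Antitone (fun x => g (max a x)) := fun x y hxy =>
    hanti (mem_Ici.2 (le_max_left _ _)) (mem_Ici.2 (le_max_left _ _)) (max_le_max_left a hxy)
  have hbdd : BddBelow (range (fun x => g (max a x))) :=
    ⟨0, by rintro _ ⟨x, rfl⟩; exact hpos _ (mem_Ici.2 (le_max_left _ _))⟩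
  have ht0 := tendsto_atTop_ciInf hanti' hbdd
  set l := ⨅ x, g (max a x) with hl
  have hl0 : 0 ≤ l := le_ciInf fun x => hpos _ (mem_Ici.2 (le_max_left _ _))
  have ht : Filter.Tendsto g Filter.atTop (nhds l) := by
    refine ht0.congr' ?_
    filter_upwards [Filter.eventually_ge_atTop a] with x hx
    rw [max_eq_right hx]
  have hneg' : ∀ x ∈ Ioi a, g' x ≤ 0 := fun x hx => hneg x (mem_Ici.2 (le_of_lt hx))
  have hint := integrableOn_Ioi_deriv_of_nonpos' hd hneg' ht
  have hval := integral_Ioi_of_hasDerivAt_of_nonpos' hd hneg' ht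
  rw [← ofReal_integral_eq_lintegral_ofReal (f := fun x => -g' x) hint.neg]
  · apply ENNReal.ofReal_le_ofReal
    rw [integral_neg, hval]; linarith
  · filter_upwards [ae_restrict_mem measurableSet_Ioi] with x hx
    simpa using hneg' x hx

/-- The energy identity for the `A`-effective energy. -/
lemma hasDerivAt_effective_energy
    (R₀ : ℝ) (hR₀ : 0 < R₀)
    (U A : ℝ → ℝ → ℝ)
    (hU : ContDiff ℝ (⊤ : ℕ∞) (Function.uncurry U))
    (hA : ContDiff ℝ (⊤ : ℕ∞) (Function.uncurry A))
    (hUper : ∀ R θ, U R (θ + 2 * π) = U R θ)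
    (hAper : ∀ R θ, A R (θ + 2 * π) = A R θ)
    (eqU : ∀ R, R₀ ≤ R → ∀ θ : ℝ,
      deriv (fun r => r * pdR U r θ) R - deriv (fun t => R * pdT U R t) θ
        = exp (4 * U R θ) / (2 * R) * ((pdR A R θ) ^ 2 - (pdT A R θ) ^ 2))
    (eqA : ∀ R, R₀ ≤ R → ∀ θ : ℝ,
      deriv (fun r => r⁻¹ * pdR A r θ) R - deriv (fun t => R⁻¹ * pdT A R t) θ
        = 4 / R * (-(pdR U R θ * pdR A R θ) + pdT U R θ * pdT A R θ))
    (b R : ℝ) (hR : R₀ ≤ R) :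
    HasDerivAt (fun r => ∫ θ in (0:ℝ)..(2 * π),
      (pdR U r θ - b / r) ^ 2 + (pdT U r θ) ^ 2
        + exp (4 * U r θ) / (4 * r ^ 2) * ((pdR A r θ) ^ 2 + (pdT A r θ) ^ 2))
      (-(2 / R * ∫ θ in (0:ℝ)..(2 * π), ((pdR U R θ - b / R) ^ 2
        + exp (4 * U R θ) / (4 * R ^ 2)
            * (2 * b * (pdR A R θ) ^ 2 + (1 - 2 * b) * (pdT A R θ) ^ 2)))) R := by
  have hRpos : 0 < R := hR₀.trans_le hR
  have hR0 : R ≠ 0 := hRpos.ne'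
  have hU1 := contDiff_pdR hU
  have hU2 := contDiff_pdT hU
  have hA1 := contDiff_pdR hA
  have hA2 := contDiff_pdT hA
  have cU := hU.continuous
  have cA := hA.continuous
  have cU1 := hU1.continuous
  have cU2 := hU2.continuous
  have cA1 := hA1.continuous
  have cA2 := hA2.continuous
  have cU11 := (contDiff_pdR hU1).continuous
  have cU12 := (contDiff_pdT hU1).continuous
  have cU22 := (contDiff_pdT hU2).continuous
  have cA11 := (contDiff_pdR hA1).continuous
  have cA12 := (contDiff_pdT hA1).continuous
  have cA22 := (contDiff_pdT hA2).continuous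
  have slice : ∀ {f : ℝ → ℝ → ℝ}, Continuous (Function.uncurry f) → ∀ r, Continuous (f r) :=
    fun hf r => hf.comp (Continuous.prodMk continuous_const continuous_id)
  have sU := slice cU
  have sA := slice cA
  have sU1 := slice cU1
  have sU2 := slice cU2
  have sA1 := slice cA1
  have sA2 := slice cA2
  have sU11 := slice cU11
  have sU12 := slice cU12
  have sU22 := slice cU22
  have sA11 := slice cA11
  have sA12 := slice cA12
  have sA22 := slice cA22
  -- the three parameter integrals
  have d1 := hasDerivAt_param (F := fun r θ => pdR U r θ ^ 2 + pdT U r θ ^ 2)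
    (F' := fun r θ => 2 * pdR U r θ * pdR (pdR U) r θ + 2 * pdT U r θ * pdT (pdR U) r θ)
    0 (2 * π) (((cU1.pow 2).add (cU2.pow 2)).congr fun _ => rfl)
    ((((continuous_const.mul cU1).mul cU11).add ((continuous_const.mul cU2).mul cU12)).congr
      fun _ => rfl)
    (fun r θ => by
      have h1 := hasDerivAt_pdR hU1 r θ
      have h2 := hasDerivAt_pdR hU2 r θ
      rw [pdR_pdT_comm hU] at h2
      exact ((h1.pow 2).add (h2.pow 2)).congr_deriv (by simp)) R
  have d2 := hasDerivAt_param (F := pdR U) (F' := pdR (pdR U)) 0 (2 * π) cU1 cU11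
    (fun r θ => hasDerivAt_pdR hU1 r θ) R
  have d3 := hasDerivAt_param
    (F := fun r θ => exp (4 * U r θ) * (pdR A r θ ^ 2 + pdT A r θ ^ 2))
    (F' := fun r θ => exp (4 * U r θ) * (4 * pdR U r θ * (pdR A r θ ^ 2 + pdT A r θ ^ 2)
      + (2 * pdR A r θ * pdR (pdR A) r θ + 2 * pdT A r θ * pdT (pdR A) r θ)))
    0 (2 * π)
    (((Real.continuous_exp.comp (continuous_const.mul cU)).mul
      ((cA1.pow 2).add (cA2.pow 2))).congr fun _ => rfl)
    (((Real.continuous_exp.comp (continuous_const.mul cU)).mul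
      (((continuous_const.mul cU1).mul ((cA1.pow 2).add (cA2.pow 2))).add
      (((continuous_const.mul cA1).mul cA11).add ((continuous_const.mul cA2).mul cA12)))).congr
      fun _ => rfl)
    (fun r θ => by
      have h0 := ((hasDerivAt_pdR hU r θ).const_mul 4).exp
      have h1 := hasDerivAt_pdR hA1 r θ
      have h2 := hasDerivAt_pdR hA2 r θ
      rw [pdR_pdT_comm hA] at h2
      refine (h0.mul ((h1.pow 2).add (h2.pow 2))).congr_deriv ?_
      simp only [Pi.add_apply, Pi.pow_apply]
      push_cast
      ring) R
  -- decomposition of the energy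
  have hdec : (fun r => ∫ θ in (0:ℝ)..(2 * π),
      (pdR U r θ - b / r) ^ 2 + (pdT U r θ) ^ 2
        + exp (4 * U r θ) / (4 * r ^ 2) * ((pdR A r θ) ^ 2 + (pdT A r θ) ^ 2))
      = fun r => (∫ θ in (0:ℝ)..(2 * π), pdR U r θ ^ 2 + pdT U r θ ^ 2)
        + r⁻¹ * (-2 * b * ∫ θ in (0:ℝ)..(2 * π), pdR U r θ)
        + r⁻¹ ^ 2 * (∫ _θ in (0:ℝ)..(2 * π), b ^ 2)
        + r⁻¹ ^ 2 * (1 / 4 * ∫ θ in (0:ℝ)..(2 * π),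
            exp (4 * U r θ) * (pdR A r θ ^ 2 + pdT A r θ ^ 2)) := by
    funext r
    have := sU r
    have := sU1 r
    have := sU2 r
    have := sA1 r
    have := sA2 r
    simp only [← intervalIntegral.integral_const_mul]
    rw [← intervalIntegral.integral_add, ← intervalIntegral.integral_add,
      ← intervalIntegral.integral_add]
    · apply intervalIntegral.integral_congr
      intro θ _
      simp only []
      ring
    all_goals exact Continuous.intervalIntegrable (by fun_prop) _ _
  rw [hdec]
  have di : HasDerivAt (fun r : ℝ => r⁻¹) (-(R ^ 2)⁻¹) R := hasDerivAt_inv hR0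
  have di2 : HasDerivAt (fun r : ℝ => r⁻¹ ^ 2) (2 * R⁻¹ * -(R ^ 2)⁻¹) R :=
    (di.pow 2).congr_deriv (by simp)
  have dall := ((d1.add (di.mul (d2.const_mul (-2 * b)))).add
    (di2.mul_const (∫ _θ in (0:ℝ)..(2 * π), b ^ 2))).add
    (di2.mul (d3.const_mul (1 / 4)))
  -- the boundary term
  have hH : ∫ θ in (0:ℝ)..(2 * π), (2 * (pdT (pdR U) R θ * pdT U R θ
        + pdR U R θ * pdT (pdT U) R θ)
      + 1 / (2 * R ^ 2) * (exp (4 * U R θ) * (4 * pdT U R θ) * (pdR A R θ * pdT A R θ)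
        + exp (4 * U R θ) * (pdT (pdR A) R θ * pdT A R θ + pdR A R θ * pdT (pdT A) R θ))
      - 2 * b / R * pdT (pdT U) R θ) = 0 := by
    rw [intervalIntegral.integral_eq_sub_of_hasDerivAt (f := fun θ =>
      2 * (pdR U R θ * pdT U R θ)
      + 1 / (2 * R ^ 2) * (exp (4 * U R θ) * (pdR A R θ * pdT A R θ))
      - 2 * b / R * pdT U R θ)]
    · have p0 := hUper R 0
      have p1 := pdR_periodic hUper R 0
      have p2 := pdT_periodic hUper R 0
      have p3 := pdR_periodic hAper R 0
      have p4 := pdT_periodic hAper R 0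
      rw [zero_add] at p0 p1 p2 p3 p4
      rw [p0, p1, p2, p3, p4, sub_self]
    · intro θ _
      have q0 := ((hasDerivAt_pdT hU R θ).const_mul 4).exp
      have q1 := hasDerivAt_pdT hU1 R θ
      have q2 := hasDerivAt_pdT hU2 R θ
      have q3 := hasDerivAt_pdT hA1 R θ
      have q4 := hasDerivAt_pdT hA2 R θ
      exact (((q1.mul q2).const_mul 2).add ((q0.mul (q3.mul q4)).const_mul _)).sub
        (q2.const_mul _)
    · have := sU R
      have := sU1 R
      have := sU2 R
      have := sA1 R
      have := sA2 R
      have := sU12 R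
      have := sU22 R
      have := sA12 R
      have := sA22 R
      exact Continuous.intervalIntegrable (by fun_prop) _ _
  -- the equations in expanded form
  have eU : ∀ θ, pdR (pdR U) R θ = -(pdR U R θ) / R + pdT (pdT U) R θ
      + exp (4 * U R θ) / (2 * R ^ 2) * ((pdR A R θ) ^ 2 - (pdT A R θ) ^ 2) := by
    intro θ
    have h := eqU R hR θ
    have h1 := ((hasDerivAt_id R).mul (hasDerivAt_pdR hU1 R θ)).deriv
    have h2 := ((hasDerivAt_pdT hU2 R θ).const_mul R).deriv
    have h1' : deriv (fun r => r * pdR U r θ) R = 1 * pdR U R θ + R * pdR (pdR U) R θ := h1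
    rw [h1', h2] at h
    have h3 : pdR (pdR U) R θ = (R * pdT (pdT U) R θ - pdR U R θ
      + exp (4 * U R θ) / (2 * R) * ((pdR A R θ) ^ 2 - (pdT A R θ) ^ 2)) / R := by
      rw [eq_div_iff hR0]; linarith
    rw [h3]; field_simp
    ring
  have eA : ∀ θ, pdR (pdR A) R θ = pdR A R θ / R + pdT (pdT A) R θ
      + 4 * (-(pdR U R θ * pdR A R θ) + pdT U R θ * pdT A R θ) := by
    intro θ
    have h := eqA R hR θ
    have h1 := (di.mul (hasDerivAt_pdR hA1 R θ)).deriv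
    have h2 := ((hasDerivAt_pdT hA2 R θ).const_mul R⁻¹).deriv
    have h1' : deriv (fun r => r⁻¹ * pdR A r θ) R
      = -(R ^ 2)⁻¹ * pdR A R θ + R⁻¹ * pdR (pdR A) R θ := h1
    rw [h1', h2] at h
    have h3 : R⁻¹ * pdR (pdR A) R θ = R⁻¹ * (pdR A R θ / R + pdT (pdT A) R θ
      + 4 * (-(pdR U R θ * pdR A R θ) + pdT U R θ * pdT A R θ)) := by
      have h4 : (R ^ 2)⁻¹ = R⁻¹ * R⁻¹ := by rw [sq, mul_inv]
      rw [h4] at h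
      linear_combination h
    exact mul_left_cancel₀ (inv_ne_zero hR0) h3
  refine dall.congr_deriv ?_
  have := sU R
  have := sU1 R
  have := sU2 R
  have := sA1 R
  have := sA2 R
  have := sU11 R
  have := sA11 R
  have := sU12 R
  have := sU22 R
  have := sA12 R
  have := sA22 R
  refine Eq.trans ?_ ((congrArg (_ + ·) hH).trans (add_zero _))
  simp only [← intervalIntegral.integral_const_mul, ← intervalIntegral.integral_neg]
  rw [← intervalIntegral.integral_add, ← intervalIntegral.integral_add,
    ← intervalIntegral.integral_add, ← intervalIntegral.integral_add,
    ← intervalIntegral.integral_add, ← intervalIntegral.integral_add]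
  · apply intervalIntegral.integral_congr
    intro θ _
    simp only [eU, eA]
    field_simp
    ring
  all_goals exact Continuous.intervalIntegrable (by fun_prop) _ _

theorem stmt6
    (R₀ : ℝ) (hR₀ : 0 < R₀)
    (U A : ℝ → ℝ → ℝ)
    (hU : ContDiff ℝ (⊤ : ℕ∞) (Function.uncurry U))
    (hA : ContDiff ℝ (⊤ : ℕ∞) (Function.uncurry A))
    (hUper : ∀ R θ, U R (θ + 2 * π) = U R θ)
    (hAper : ∀ R θ, A R (θ + 2 * π) = A R θ)
    (eqU : ∀ R, R₀ ≤ R → ∀ θ : ℝ,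
      deriv (fun r => r * pdR U r θ) R - deriv (fun t => R * pdT U R t) θ
        = exp (4 * U R θ) / (2 * R) * ((pdR A R θ) ^ 2 - (pdT A R θ) ^ 2))
    (eqA : ∀ R, R₀ ≤ R → ∀ θ : ℝ,
      deriv (fun r => r⁻¹ * pdR A r θ) R - deriv (fun t => R⁻¹ * pdT A R t) θ
        = 4 / R * (-(pdR U R θ * pdR A R θ) + pdT U R θ * pdT A R θ))
    (E : ℝ → ℝ)
    (hE : ∀ R, E R = ∫ θ in (0:ℝ)..(2 * π),
      (pdR U R θ) ^ 2 + (pdT U R θ) ^ 2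
        + exp (4 * U R θ) / (4 * R ^ 2) * ((pdR A R θ) ^ 2 + (pdT A R θ) ^ 2))
    (Eb : ℝ → ℝ → ℝ)
    (hEb : ∀ b R, Eb b R = ∫ θ in (0:ℝ)..(2 * π),
      (pdR U R θ - b / R) ^ 2 + (pdT U R θ) ^ 2
        + exp (4 * U R θ) / (4 * R ^ 2) * ((pdR A R θ) ^ 2 + (pdT A R θ) ^ 2))
 :
    (∀ b ∈ Set.Icc (0:ℝ) (1/2),
      ∫⁻ R in Set.Ioi R₀, ENNReal.ofReal (2 / R * ∫ θ in (0:ℝ)..(2 * π),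
          exp (4 * U R θ) / (4 * R ^ 2)
            * (2 * b * (pdR A R θ) ^ 2 + (1 - 2 * b) * (pdT A R θ) ^ 2))
        ≤ ENNReal.ofReal (Eb b R₀ + b ^ 2 * E R₀))
    ∧ ∀ b ∈ Set.Ioo (0:ℝ) (1/2),
      ∫⁻ R in Set.Ioi R₀, ENNReal.ofReal (1 / (4 * R ^ 3) * ∫ θ in (0:ℝ)..(2 * π),
          exp (4 * U R θ) * ((pdR A R θ) ^ 2 + (pdT A R θ) ^ 2)) < ⊤ := by
  have h2π : (0:ℝ) ≤ 2 * π := by positivity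
  have slice : ∀ {f : ℝ → ℝ → ℝ}, ContDiff ℝ (⊤ : ℕ∞) (Function.uncurry f) →
      ∀ r, Continuous (f r) :=
    fun hf r => hf.continuous.comp (Continuous.prodMk continuous_const continuous_id)
  have sU := slice hU
  have sU1 := slice (contDiff_pdR hU)
  have sA1 := slice (contDiff_pdR hA)
  have sA2 := slice (contDiff_pdT hA)
  have hE0 : 0 ≤ E R₀ := by
    rw [hE]
    exact intervalIntegral.integral_nonneg h2π fun θ _ => by positivity
  have main : ∀ b ∈ Set.Icc (0:ℝ) (1/2),
      ∫⁻ R in Set.Ioi R₀, ENNReal.ofReal (2 / R * ∫ θ in (0:ℝ)..(2 * π),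
          exp (4 * U R θ) / (4 * R ^ 2)
            * (2 * b * (pdR A R θ) ^ 2 + (1 - 2 * b) * (pdT A R θ) ^ 2))
        ≤ ENNReal.ofReal (Eb b R₀ + b ^ 2 * E R₀) := by
    intro b hb
    have hb0 : 0 ≤ b := hb.1
    have hb1 : 0 ≤ 1 - 2 * b := by linarith [hb.2]
    have hEbfun : Eb b = fun r => ∫ θ in (0:ℝ)..(2 * π),
      (pdR U r θ - b / r) ^ 2 + (pdT U r θ) ^ 2
        + exp (4 * U r θ) / (4 * r ^ 2) * ((pdR A r θ) ^ 2 + (pdT A r θ) ^ 2) := funext (hEb b)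
    have hder := fun R (hR : R ∈ Ici R₀) => hasDerivAt_effective_energy R₀ hR₀ U A hU hA hUper
      hAper eqU eqA b R hR
    rw [← hEbfun] at hder
    have hlin := lintegral_neg_deriv_le hder
      (fun R hR => by
        have hRpos : 0 < R := hR₀.trans_le hR
        rw [neg_nonpos]
        exact mul_nonneg (by positivity)
          (intervalIntegral.integral_nonneg h2π fun θ _ => by positivity))
      (fun R _ => by
        rw [hEb]
        exact intervalIntegral.integral_nonneg h2π fun θ _ => by positivity)
    refine le_trans (le_trans ?_ hlin) (ENNReal.ofReal_le_ofReal ?_)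
    · refine setLIntegral_mono' measurableSet_Ioi fun R hR => ENNReal.ofReal_le_ofReal ?_
      have hRpos : 0 < R := hR₀.trans hR
      have := sU R
      have := sU1 R
      have := sA1 R
      have := sA2 R
      rw [neg_neg]
      refine mul_le_mul_of_nonneg_left ?_ (by positivity)
      refine intervalIntegral.integral_mono_on h2π
        (Continuous.intervalIntegrable (by fun_prop) _ _)
        (Continuous.intervalIntegrable (by fun_prop) _ _) fun θ _ => ?_
      exact le_add_of_nonneg_left (sq_nonneg _)
    · have := mul_nonneg (sq_nonneg b) hE0
      linarith
  refine ⟨main, fun b _ => ?_⟩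
  refine lt_of_le_of_lt (le_of_eq ?_)
    ((main (1/4) ⟨by norm_num, by norm_num⟩).trans_lt ENNReal.ofReal_lt_top)
  refine lintegral_congr fun R => ?_
  rw [← intervalIntegral.integral_const_mul, ← intervalIntegral.integral_const_mul]
  congr 1
  refine intervalIntegral.integral_congr fun θ _ => ?_
  show (1 / (4 * R ^ 3) * (exp (4 * U R θ) * ((pdR A R θ) ^ 2 + (pdT A R θ) ^ 2)) : ℝ)
    = 2 / R * (exp (4 * U R θ) / (4 * R ^ 2)
      * (2 * (1 / 4) * (pdR A R θ) ^ 2 + (1 - 2 * (1 / 4)) * (pdT A R θ) ^ 2))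
  ring
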